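/- arXiv:math/9905125 — 3 statements merged into one kernel-verified Lean document; each statement's English description precedes it below -/
import Mathlib

section
/- Let R be a unique factorization domain and 𝒜 a finite set of nonzero elements of R such that no element of 𝒜 divides another. If σ ⊆ 𝒜 has the property that every τ ⊆ 𝒜 whose least common multiple is associated to that of σ equals σ, then for every a ∈ σ the subset σ∖{a} has the same property. -/
/-- Let `R` be a UFD and `𝒜` a finite set of nonzero elements of `R`,
none dividing another.  If `σ ⊆ 𝒜` is such that every `τ ⊆ 𝒜` whose lcm is associated
to that of `σ` equals `σ`, then for every `a ∈ σ` the subset `σ ∖ {a}` has the same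
property.  Here `L` chooses a least common multiple of each subset of `𝒜`. -/
theorem erase_scarf_of_scarf (R : Type*) [CommRing R] [IsDomain R]
    [UniqueFactorizationMonoid R] [DecidableEq R]
    (A : Finset R) (hA0 : (0 : R) ∉ A)
    (hdvd : ∀ a ∈ A, ∀ b ∈ A, a ≠ b → ¬ a ∣ b)
    (L : Finset R → R)
    (hLdvd : ∀ σ ⊆ A, ∀ a ∈ σ, a ∣ L σ)
    (hLlcm : ∀ σ ⊆ A, ∀ t : R, (∀ a ∈ σ, a ∣ t) → L σ ∣ t)
    (σ : Finset R) (hσ : σ ⊆ A)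
    (hscarf : ∀ τ ⊆ A, Associated (L τ) (L σ) → τ = σ)
    (a : R) (ha : a ∈ σ) :
    ∀ τ ⊆ A, Associated (L τ) (L (σ.erase a)) → τ = σ.erase a := by
  intro τ hτ hassoc
  have hea : σ.erase a ⊆ A := (Finset.erase_subset a σ).trans hσ
  have hins : insert a τ ⊆ A := Finset.insert_subset (hσ ha) hτ
  have hunion : insert a τ = σ := by
    apply hscarf _ hins
    apply associated_of_dvd_dvd
    · apply hLlcm _ hins
      intro b hb
      rcases Finset.mem_insert.1 hb with rfl | hb
      · exact hLdvd σ hσ _ ha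
      · refine ((hLdvd τ hτ b hb).trans hassoc.dvd).trans ?_
        exact hLlcm _ hea _ fun c hc => hLdvd σ hσ c (Finset.mem_of_mem_erase hc)
    · apply hLlcm _ hσ
      intro b hb
      by_cases hba : b = a
      · subst hba
        exact hLdvd _ hins _ (Finset.mem_insert_self _ _)
      · refine ((hLdvd _ hea b (Finset.mem_erase.2 ⟨hba, hb⟩)).trans hassoc.symm.dvd).trans ?_
        exact hLlcm _ hτ _ fun c hc => hLdvd _ hins c (Finset.mem_insert_of_mem hc)
  have hnot : a ∉ τ := by
    intro haτ
    rw [Finset.insert_eq_of_mem haτ] at hunion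
    rw [hunion] at hassoc
    have h := hscarf _ hea hassoc.symm
    rw [← h] at ha
    exact Finset.notMem_erase a σ ha
  rw [← hunion, Finset.erase_insert hnot]
end

section
/- Let E be a set of pairwise non-associated irreducible polynomials of S containing all irreducible factors of every element of 𝒜. If every finite sequence of distinct elements of E is a regular sequence on S, then the Taylor complex of 𝒜 is a resolution of S/I. -/
open Finset

noncomputable section

/-- Degree-`p` term of the Taylor complex: the free `S`-module on the `p`-element
subsets of the index set `Fin m`. -/
abbrev TaylorMod (k : Type) [Field k] (n m p : ℕ) : Type :=
  {σ : Finset (Fin m) // σ.card = p} →₀ MvPolynomial (Fin n) k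

/-- The Taylor differential, sending a `p`-element subset `σ` to
`∑_{i ∈ σ} (-1)^{ε(σ,i)} (Q_σ / Q_{σ∖{i}}) (σ∖{i})`, where `c σ i` is the quotient
`Q_σ / Q_{σ∖{i}}`. -/
def taylorD (k : Type) [Field k] (n m : ℕ)
    (c : Finset (Fin m) → Fin m → MvPolynomial (Fin n) k) (p : ℕ) :
    TaylorMod k n m p →ₗ[MvPolynomial (Fin n) k] TaylorMod k n m (p - 1) :=
  Finsupp.lsum (MvPolynomial (Fin n) k) fun σ =>
    LinearMap.toSpanSingleton _ _
      (∑ i ∈ σ.1.attach,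
        Finsupp.single
          ⟨σ.1.erase i.1, by rw [Finset.card_erase_of_mem i.2, σ.2]⟩
          ((-1) ^ (σ.1.filter (fun j => j < i.1)).card * c σ.1 i.1))

/-- The identification of the degree-`0` term of the Taylor complex with `S`. -/
def taylorAug (k : Type) [Field k] (n m : ℕ) :
    TaylorMod k n m 0 →ₗ[MvPolynomial (Fin n) k] MvPolynomial (Fin n) k :=
  Finsupp.lsum (MvPolynomial (Fin n) k) fun _ => LinearMap.id

/-- The Taylor complex (built from the quotient data `c`) is a resolution of `S/I`:
it is exact in all degrees `p ≥ 1` and the image of its first differential is the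
ideal generated by `Q`. -/
def IsTaylorResolution (k : Type) [Field k] (n m : ℕ) (Q : Fin m → MvPolynomial (Fin n) k)
    (c : Finset (Fin m) → Fin m → MvPolynomial (Fin n) k) : Prop :=
  (∀ p : ℕ, 1 ≤ p →
      LinearMap.ker (taylorD k n m c p) = LinearMap.range (taylorD k n m c (p + 1))) ∧
  Submodule.map (taylorAug k n m) (LinearMap.range (taylorD k n m c 1)) =
    Ideal.span (Set.range Q)

end


section cx
variable {R : Type*} [CommRing R] {α : Type*} [LinearOrder α]

/-- restricted Taylor differential -/
def tD (c : Finset α → α → R) (W B : Finset α) (f : Finset α → R) (τ : Finset α) : R :=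
  ∑ i ∈ W \ τ, (-1) ^ (τ.filter (fun j => j < i)).card * c (B ∪ insert i τ) i * f (insert i τ)

lemma tD_insert_mem (c : Finset α → α → R) (W B : Finset α) (a : α) (ha : ∀ i ∈ W, i < a)
    (f : Finset α → R) (τ : Finset α) (_hτ : τ ⊆ W) :
    tD c (insert a W) B f (insert a τ) = tD c W (insert a B) (fun s => f (insert a s)) τ := by
  have haW : a ∉ W := fun h => lt_irrefl _ (ha a h)
  unfold tD
  have h1 : insert a W \ insert a τ = W \ τ := by
    ext i
    simp only [mem_sdiff, mem_insert]
    constructor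
    · rintro ⟨h | h, h2⟩
      · exact absurd (Or.inl h) h2
      · exact ⟨h, fun h3 => h2 (Or.inr h3)⟩
    · rintro ⟨h, h2⟩
      refine ⟨Or.inr h, ?_⟩
      rintro (h3 | h3)
      · exact haW (h3 ▸ h)
      · exact h2 h3
  rw [h1]
  refine Finset.sum_congr rfl fun i hi => ?_
  have hi' := ha i (mem_sdiff.1 hi).1
  have h2 : (insert a τ).filter (fun j => j < i) = τ.filter (fun j => j < i) := by
    rw [Finset.filter_insert, if_neg (not_lt.2 hi'.le)]
  have h3 : B ∪ insert i (insert a τ) = insert a B ∪ insert i τ := by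
    ext; simp only [mem_union, mem_insert]; tauto
  rw [h2, h3, Finset.insert_comm]

lemma tD_insert_notMem (c : Finset α → α → R) (W B : Finset α) (a : α) (ha : ∀ i ∈ W, i < a)
    (f : Finset α → R) (τ : Finset α) (hτ : τ ⊆ W) :
    tD c (insert a W) B f τ =
      tD c W B f τ + (-1) ^ τ.card * c (B ∪ insert a τ) a * f (insert a τ) := by
  have haW : a ∉ W := fun h => lt_irrefl _ (ha a h)
  unfold tD
  have haτ : a ∉ τ := fun h => haW (hτ h)
  rw [Finset.insert_sdiff_of_notMem _ haτ, Finset.sum_insert (by simp [haW]), add_comm]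
  congr 4
  rw [Finset.filter_true_of_mem]
  exact fun j hj => ha j (hτ hj)

lemma tD_add (c : Finset α → α → R) (W B : Finset α) (f g : Finset α → R) (τ : Finset α) :
    tD c W B (fun s => f s + g s) τ = tD c W B f τ + tD c W B g τ := by
  unfold tD
  rw [← Finset.sum_add_distrib]
  exact Finset.sum_congr rfl fun i _ => by ring

lemma tD_congr (c : Finset α → α → R) (W B : Finset α) (f g : Finset α → R)
    (h : ∀ τ ⊆ W, τ.Nonempty → f τ = g τ) (τ : Finset α) (hτ : τ ⊆ W) :
    tD c W B f τ = tD c W B g τ := by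
  unfold tD
  refine Finset.sum_congr rfl fun i hi => ?_
  rw [h _ (Finset.insert_subset (mem_sdiff.1 hi).1 hτ) (Finset.insert_nonempty _ _)]

lemma tD_twist (c : Finset α → α → R)
    (hcomm : ∀ σ, ∀ i ∈ σ, ∀ j ∈ σ, i ≠ j → c σ i * c (σ.erase i) j = c σ j * c (σ.erase j) i)
    (W B : Finset α) (a : α) (ha : ∀ i ∈ W, i < a) (haB : a ∉ B) (hWB : Disjoint W B)
    (g : Finset α → R) (τ : Finset α) (hτ : τ ⊆ W) :
    tD c W B (fun s => (-1) ^ s.card * c (B ∪ insert a s) a * g s) τ =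
      - ((-1) ^ τ.card * c (B ∪ insert a τ) a * tD c W (insert a B) g τ) := by
  have haW : a ∉ W := fun h => lt_irrefl _ (ha a h)
  unfold tD
  rw [Finset.mul_sum, ← Finset.sum_neg_distrib]
  refine Finset.sum_congr rfl fun i hi => ?_
  obtain ⟨hiW, hiτ⟩ := mem_sdiff.1 hi
  have hia := (ha i hiW).ne
  have hiB : i ∉ B := Finset.disjoint_left.1 hWB hiW
  have haτ : a ∉ τ := fun h => haW (hτ h)
  have := hcomm (B ∪ insert a (insert i τ)) a (by simp) i (by simp) hia.symm
  have e1 : (B ∪ insert a (insert i τ)).erase a = B ∪ insert i τ := by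
    ext j; simp only [mem_erase, mem_union, mem_insert]
    constructor
    · tauto
    · intro h
      refine ⟨?_, by tauto⟩
      rintro rfl
      rcases h with h | h | h
      · exact haB h
      · exact hia h.symm
      · exact haτ h
  have e2 : (B ∪ insert a (insert i τ)).erase i = B ∪ insert a τ := by
    ext j; simp only [mem_erase, mem_union, mem_insert]
    constructor
    · tauto
    · intro h
      refine ⟨?_, by tauto⟩
      rintro rfl
      rcases h with h | h | h
      · exact hiB h
      · exact hia h
      · exact hiτ h
  have e3 : insert a B ∪ insert i τ = B ∪ insert a (insert i τ) := by
    ext; simp only [mem_union, mem_insert]; tauto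
  rw [e1, e2] at this
  beta_reduce
  rw [Finset.card_insert_of_notMem hiτ, e3, pow_succ]
  linear_combination (-(-1) ^ (τ.filter (fun j => j < i)).card * (-1) ^ τ.card
    * g (insert i τ)) * this

lemma tD_tD (c : Finset α → α → R)
    (hcomm : ∀ σ, ∀ i ∈ σ, ∀ j ∈ σ, i ≠ j → c σ i * c (σ.erase i) j = c σ j * c (σ.erase j) i)
    (W : Finset α) : ∀ (B : Finset α), Disjoint W B → ∀ (g : Finset α → R), ∀ τ ⊆ W,
      tD c W B (tD c W B g) τ = 0 := by
  induction W using Finset.induction_on_max with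
  | empty => intro B _ g τ hτ; simp [tD]
  | insert a W ha ih =>
    intro B hB g τ hτ
    have haW : a ∉ W := fun h => lt_irrefl _ (ha a h)
    rw [Finset.disjoint_insert_left] at hB
    have hB2 : Disjoint W (insert a B) := Finset.disjoint_insert_right.2 ⟨haW, hB.2⟩
    have key : ∀ s ⊆ W, tD c (insert a W) B (tD c (insert a W) B g) (insert a s) = 0 := by
      intro s hs
      rw [tD_insert_mem c W B a ha _ s hs]
      rw [tD_congr c W (insert a B) _ (tD c W (insert a B) (fun s => g (insert a s)))
        (fun t ht _ => tD_insert_mem c W B a ha g t ht) s hs]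
      exact ih _ hB2 _ _ hs
    by_cases haτ : a ∈ τ
    · have := key (τ.erase a) (by rwa [← Finset.subset_insert_iff])
      rwa [Finset.insert_erase haτ] at this
    · have hτW : τ ⊆ W := (Finset.subset_insert_iff_of_notMem haτ).1 hτ
      rw [tD_insert_notMem c W B a ha _ τ hτW, tD_insert_mem c W B a ha _ τ hτW]
      rw [tD_congr c W B _ _ (fun t ht _ => tD_insert_notMem c W B a ha g t ht) τ hτW]
      rw [tD_add, ih B hB.2 g τ hτW,
        tD_twist c hcomm W B a ha hB.1 hB.2 (fun s => g (insert a s)) τ hτW]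
      ring

theorem tD_exact (c : Finset α → α → R)
    (hcomm : ∀ σ, ∀ i ∈ σ, ∀ j ∈ σ, i ≠ j → c σ i * c (σ.erase i) j = c σ j * c (σ.erase j) i)
    (hcolon : ∀ (W B : Finset α) (a : α), a ∉ W → a ∉ B → Disjoint W B → ∀ f : R,
      f * c (insert a B) a ∈ Ideal.span ((fun i => c (insert i B) i) '' (W : Set α)) →
      f ∈ Ideal.span ((fun i => c (insert i (insert a B)) i) '' (W : Set α)))
    (W : Finset α) : ∀ (B : Finset α), Disjoint W B → ∀ (f : Finset α → R),
      f ∅ ∈ Ideal.span ((fun i => c (insert i B) i) '' (W : Set α)) →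
      (∀ τ ⊆ W, tD c W B f τ = 0) → ∃ g : Finset α → R, ∀ τ ⊆ W, f τ = tD c W B g τ := by
  induction W using Finset.induction_on_max with
  | empty =>
    intro B _ f hf _
    refine ⟨0, fun τ hτ => ?_⟩
    rw [Finset.subset_empty.1 hτ]
    simpa [tD] using hf
  | insert a W ha ih =>
    intro B hB f hf0 hf
    have haW : a ∉ W := fun h => lt_irrefl _ (ha a h)
    rw [Finset.disjoint_insert_left] at hB
    have hB2 : Disjoint W (insert a B) := Finset.disjoint_insert_right.2 ⟨haW, hB.2⟩
    have hbu : ∀ (B : Finset α) i, B ∪ insert i ∅ = insert i B := by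
      intro B i; ext; simp only [mem_union, mem_insert, notMem_empty]; tauto
    obtain ⟨g1, hg1⟩ := ih (insert a B) hB2 (fun s => f (insert a s)) (by
        apply hcolon W B a haW hB.1 hB.2
        have h := hf ∅ (Finset.empty_subset _)
        rw [tD_insert_notMem c W B a ha f ∅ (Finset.empty_subset _), hbu] at h
        have h2 : f (insert a ∅) * c (insert a B) a = - tD c W B f ∅ := by
          simp only [card_empty, pow_zero, one_mul] at h
          linear_combination h
        rw [h2]
        refine neg_mem ?_
        unfold tD
        refine sum_mem fun i hi => ?_
        rw [hbu, mul_right_comm]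
        exact Ideal.mul_mem_left _ _ (Ideal.subset_span ⟨i, (mem_sdiff.1 hi).1, rfl⟩))
      (fun τ hτ => by
        rw [← tD_insert_mem c W B a ha f τ hτ]
        exact hf _ (Finset.insert_subset_insert _ hτ))
    rw [Finset.coe_insert, Set.image_insert_eq, Ideal.mem_span_insert] at hf0
    obtain ⟨r, y, hy, hry⟩ := hf0
    set g1' : Finset α → R := fun s => if s = ∅ then r else g1 s with hg1'
    have hg : ∀ τ ⊆ W, f (insert a τ) = tD c W (insert a B) g1' τ := by
      intro τ hτ
      rw [hg1 τ hτ]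
      refine tD_congr c W _ _ _ (fun t _ ht => ?_) τ hτ
      simp [hg1', ht.ne_empty]
    obtain ⟨g0, hg0⟩ := ih B hB.2
      (fun s => f s + -1 * ((-1) ^ s.card * c (B ∪ insert a s) a * g1' s)) (by
        simp only [hbu, hry, hg1', card_empty, pow_zero, if_true]
        convert hy using 1
        ring)
      (fun τ hτ => by
        have h1 := hf τ (hτ.trans (Finset.subset_insert _ _))
        rw [tD_insert_notMem c W B a ha f τ hτ, hg τ hτ] at h1
        have h2 := tD_twist c hcomm W B a ha hB.1 hB.2 g1' τ hτ
        rw [tD_add]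
        have h3 : tD c W B (fun s => -1 * ((-1) ^ s.card * c (B ∪ insert a s) a * g1' s)) τ
          = - tD c W B (fun s => ((-1) ^ s.card * c (B ∪ insert a s) a * g1' s)) τ := by
          unfold tD
          rw [← Finset.sum_neg_distrib]
          exact Finset.sum_congr rfl fun i _ => by ring
        rw [h3, h2, ← h1]
        ring)
    refine ⟨fun s => if a ∈ s then g1' (s.erase a) else g0 s, fun τ hτ => ?_⟩
    have hA : ∀ s ⊆ W, a ∉ s := fun s hs h => haW (hs h)
    by_cases haτ : a ∈ τ
    · obtain ⟨s, hs, rfl⟩ : ∃ s ⊆ W, τ = insert a s :=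
        ⟨τ.erase a, by rwa [← Finset.subset_insert_iff], (Finset.insert_erase haτ).symm⟩
      rw [tD_insert_mem c W B a ha _ s hs, hg s hs]
      refine tD_congr c W _ _ _ (fun t ht _ => ?_) s hs
      simp [hA t ht]
    · have hτW : τ ⊆ W := (Finset.subset_insert_iff_of_notMem haτ).1 hτ
      rw [tD_insert_notMem c W B a ha _ τ hτW]
      have h0 := hg0 τ hτW
      rw [tD_congr c W B g0 (fun s => if a ∈ s then g1' (s.erase a) else g0 s)
        (fun t ht _ => by simp [hA t ht]) τ hτW] at h0
      rw [← h0]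
      simp [hA τ hτW]
end cx

section mono
variable {R : Type*} [CommRing R] {ι : Type*} {α : Type*}

/-- monomials in the family x -/
def tM (x : ι → R) (a : ι →₀ ℕ) : R := a.prod fun i n => x i ^ n

lemma tM_zero (x : ι → R) : tM x 0 = 1 := by simp [tM]

lemma tM_single (x : ι → R) (i : ι) : tM x (Finsupp.single i 1) = x i := by
  simp [tM]

lemma tM_add (x : ι → R) (a b : ι →₀ ℕ) : tM x (a + b) = tM x a * tM x b := by
  classical
  exact Finsupp.prod_add_index' (by simp) (by intros; rw [pow_add])

lemma tM_dvd (x : ι → R) {a b : ι →₀ ℕ} (h : a ≤ b) : tM x a ∣ tM x b := by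
  obtain ⟨d, rfl⟩ := exists_add_of_le h
  exact ⟨_, tM_add x a d⟩

/-- the monomial ideal -/
def tJ (x : ι → R) (W : Finset α) (e : α → ι →₀ ℕ) : Ideal R :=
  Ideal.span ((fun i => tM x (e i)) '' (W : Set α))

lemma tM_mem_tJ (x : ι → R) {W : Finset α} (e : α → ι →₀ ℕ) {i : α} (hi : i ∈ W)
    {b : ι →₀ ℕ} (h : e i ≤ b) : tM x b ∈ tJ x W e :=
  Ideal.mem_of_dvd _ (tM_dvd x h) (Ideal.subset_span ⟨i, hi, rfl⟩)

lemma tJ_le (x : ι → R) {W : Finset α} {e : α → ι →₀ ℕ} {K : Ideal R}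
    (h : ∀ i ∈ W, tM x (e i) ∈ K) : tJ x W e ≤ K := by
  refine Ideal.span_le.2 ?_
  rintro _ ⟨i, hi, rfl⟩
  exact h i hi

open Classical in
lemma colon_step (x : ι → R) (W : Finset α) (e : α → ι →₀ ℕ) (w : ι)
    (hw : ∀ f, x w * f ∈ tJ x (W.filter (fun i => e i w = 0)) e →
      f ∈ tJ x (W.filter (fun i => e i w = 0)) e) (f : R) (hf : x w * f ∈ tJ x W e) :
    f ∈ tJ x W (fun i => e i - Finsupp.single w 1) := by
  set J0 := tJ x (W.filter (fun i => e i w = 0)) e with hJ0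
  set J1 := tJ x W (fun i => e i - Finsupp.single w 1) with hJ1
  have h1 : tJ x W e ≤ J0 ⊔ Ideal.span {x w} * J1 := by
    refine tJ_le x fun i hi => ?_
    by_cases h : e i w = 0
    · exact Ideal.mem_sup_left (tM_mem_tJ x e (Finset.mem_filter.2 ⟨hi, h⟩) le_rfl)
    · refine Ideal.mem_sup_right ?_
      have h2 : Finsupp.single w 1 ≤ e i := by
        rw [Finsupp.single_le_iff]; omega
      have h3 : e i = Finsupp.single w 1 + (e i - Finsupp.single w 1) :=
        (add_tsub_cancel_of_le h2).symm
      rw [h3, tM_add, tM_single]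
      exact Ideal.mul_mem_mul (Ideal.mem_span_singleton_self _)
        (tM_mem_tJ x (fun i => e i - Finsupp.single w 1) hi le_rfl)
  obtain ⟨a, ha, y, hy, hay⟩ := Submodule.mem_sup.1 (h1 hf)
  obtain ⟨b, hb, rfl⟩ := Ideal.mem_span_singleton_mul.1 hy
  have h4 : f - b ∈ J0 := hw _ (by
    have : x w * (f - b) = a := by linear_combination -hay
    rwa [this])
  have h5 : J0 ≤ J1 := tJ_le x fun i hi =>
    tM_mem_tJ x (fun i => e i - Finsupp.single w 1) (Finset.mem_filter.1 hi).1 tsub_le_self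
  have := add_mem (h5 h4) hb
  simpa using this

open Classical in
lemma nzd (x : ι → R) (hreg : ∀ (s : Finset ι) (z : ι), z ∉ s → ∀ f,
      x z * f ∈ Ideal.span (x '' (s : Set ι)) → f ∈ Ideal.span (x '' (s : Set ι))) (N : ℕ) :
    ∀ (W : Finset α) (e : α → ι →₀ ℕ), ∑ i ∈ W, (e i).degree = N → ∀ z, (∀ i ∈ W, e i z = 0) →
      ∀ f, x z * f ∈ tJ x W e → f ∈ tJ x W e := by
  induction N using Nat.strong_induction_on with
  | _ N ih =>
  intro W e hN z hz f hf
  by_cases h0 : ∃ i ∈ W, e i = 0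
  · obtain ⟨i, hi, h⟩ := h0
    have : (1 : R) ∈ tJ x W e := by
      rw [← tM_zero x]; exact tM_mem_tJ x e hi h.le
    rw [(Ideal.eq_top_iff_one _).2 this]; trivial
  push Not at h0
  by_cases h1 : ∀ i ∈ W, (e i).degree ≤ 1
  · have h2 : ∀ i ∈ W, ∃ w, e i = Finsupp.single w 1 := by
      intro i hi
      obtain ⟨w, hw⟩ := Finsupp.ne_iff.1 (h0 i hi)
      have h3 : Finsupp.single w 1 ≤ e i := by
        rw [Finsupp.single_le_iff]; simp at hw; omega
      refine ⟨w, ?_⟩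
      obtain ⟨d, hd⟩ := exists_add_of_le h3
      have h4 := h1 i hi
      rw [hd, map_add, Finsupp.degree_single] at h4
      have h5 : d.degree = 0 := by omega
      rw [Finsupp.degree_eq_zero_iff] at h5
      rw [hd, h5, add_zero]
    have h3 : tJ x W e = Ideal.span (x '' ((W.biUnion fun i => (e i).support : Finset ι) : Set ι)) := by
      apply le_antisymm
      · refine tJ_le x fun i hi => ?_
        obtain ⟨w, hw⟩ := h2 i hi
        rw [hw, tM_single]
        refine Ideal.subset_span ⟨w, ?_, rfl⟩
        simp only [Finset.coe_biUnion, Set.mem_iUnion]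
        exact ⟨i, hi, by simp [hw]⟩
      · refine Ideal.span_le.2 ?_
        rintro _ ⟨w, hw, rfl⟩
        rw [Finset.mem_coe, Finset.mem_biUnion] at hw
        obtain ⟨i, hi, hw⟩ := hw
        obtain ⟨v, hv⟩ := h2 i hi
        have hwv : w = v := by
          by_contra hne
          rw [hv, Finsupp.mem_support_iff, Finsupp.single_apply, if_neg (Ne.symm hne)] at hw
          exact hw rfl
        subst hwv
        rw [← tM_single x]
        exact tM_mem_tJ x e hi hv.le
    rw [h3] at hf ⊢
    refine hreg _ z ?_ f hf
    rw [Finset.mem_biUnion]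
    rintro ⟨i, hi, h⟩
    exact Finsupp.mem_support_iff.1 h (hz i hi)
  · push Not at h1
    obtain ⟨i0, hi0, hd⟩ := h1
    obtain ⟨w, hw⟩ := Finsupp.ne_iff.1 (h0 i0 hi0)
    have hw' : e i0 w ≠ 0 := by simpa using hw
    have hs : Finsupp.single w 1 ≤ e i0 := by
      rw [Finsupp.single_le_iff]; omega
    have hzw : w ≠ z := by
      rintro rfl; exact hw' (hz i0 hi0)
    set e' : α → ι →₀ ℕ := Function.update e i0 (Finsupp.single w 1) with he'
    have hlt1 : ∑ i ∈ W, (e' i).degree < N := by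
      rw [← hN]
      refine Finset.sum_lt_sum (fun i _ => ?_) ⟨i0, hi0, ?_⟩
      · by_cases h : i = i0
        · subst h; simp only [he', Function.update_self, Finsupp.degree_single]; omega
        · simp [he', h]
      · simp only [he', Function.update_self, Finsupp.degree_single]; omega
    have hle : tJ x W e ≤ tJ x W e' := tJ_le x fun i hi => tM_mem_tJ x e' hi (by
      by_cases h : i = i0
      · subst h; simpa [he'] using hs
      · simp [he', h])
    have hf1 : f ∈ tJ x W e' := ih _ hlt1 W e' rfl z (fun i hi => by
      by_cases h : i = i0
      · subst h; simp [he', hzw]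
      · simpa [he', h] using hz i hi) f (hle hf)
    have hle2 : tJ x W e' ≤ tJ x W e ⊔ Ideal.span {x w} := tJ_le x fun i hi => by
      by_cases h : i = i0
      · subst h
        refine Ideal.mem_sup_right ?_
        simp only [he', Function.update_self, tM_single]
        exact Ideal.mem_span_singleton_self _
      · refine Ideal.mem_sup_left ?_
        simp only [he', Function.update_of_ne h]
        exact tM_mem_tJ x e hi le_rfl
    obtain ⟨b, hb, y, hy, rfl⟩ := Submodule.mem_sup.1 (hle2 hf1)
    obtain ⟨r, rfl⟩ := Ideal.mem_span_singleton.1 hy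
    refine add_mem hb ?_
    have h5 : x w * (x z * r) ∈ tJ x W e := by
      have := sub_mem hf (Ideal.mul_mem_left _ (x z) hb)
      convert this using 1
      ring
    have hlt0 : ∑ i ∈ W.filter (fun i => e i w = 0), (e i).degree < N := by
      rw [← hN]
      refine Finset.sum_lt_sum_of_subset (Finset.filter_subset _ _) hi0 ?_ (by omega) ?_
      · simp [hw']
      · intros; exact Nat.zero_le _
    have h6 := colon_step x W e w (ih _ hlt0 _ e rfl w
      (fun i hi => (Finset.mem_filter.1 hi).2)) _ h5
    have hdeg : ∀ a : ι →₀ ℕ, (a - Finsupp.single w 1).degree ≤ a.degree :=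
      fun a => Finsupp.degree_mono tsub_le_self
    have hlt2 : ∑ i ∈ W, (e i - Finsupp.single w 1).degree < N := by
      rw [← hN]
      refine Finset.sum_lt_sum (fun i _ => hdeg _) ⟨i0, hi0, ?_⟩
      have : (e i0).degree = (Finsupp.single w 1 + (e i0 - Finsupp.single w 1)).degree := by
        rw [add_tsub_cancel_of_le hs]
      rw [this, map_add, Finsupp.degree_single]
      omega
    have h7 := ih _ hlt2 W (fun i => e i - Finsupp.single w 1) rfl z (fun i hi => by
      simp [hz i hi]) r h6
    have h8 : tJ x W (fun i => e i - Finsupp.single w 1) ≤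
        Submodule.comap (LinearMap.mulLeft R (x w)) (tJ x W e) := tJ_le x fun i hi => by
      rw [Submodule.mem_comap, LinearMap.mulLeft_apply, ← tM_single x w, ← tM_add]
      exact tM_mem_tJ x e hi le_add_tsub
    exact h8 h7

lemma colon (x : ι → R) (hreg : ∀ (s : Finset ι) (z : ι), z ∉ s → ∀ f,
      x z * f ∈ Ideal.span (x '' (s : Set ι)) → f ∈ Ideal.span (x '' (s : Set ι)))
    (W : Finset α) (M : ι →₀ ℕ) : ∀ (e : α → ι →₀ ℕ) (f : R), f * tM x M ∈ tJ x W e →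
      f ∈ tJ x W (fun i => e i - M) := by
  classical
  induction hN : M.degree generalizing M with
  | zero =>
    rw [Finsupp.degree_eq_zero_iff] at hN
    subst hN
    intro e f h
    simpa [tM_zero] using h
  | succ N ih =>
    intro e f h
    have hM : M ≠ 0 := by rintro rfl; simp at hN
    obtain ⟨w, hw⟩ := Finsupp.ne_iff.1 hM
    have h3 : Finsupp.single w 1 ≤ M := by
      rw [Finsupp.single_le_iff]; simp at hw; omega
    obtain ⟨d, rfl⟩ := exists_add_of_le h3
    rw [map_add, Finsupp.degree_single] at hN
    rw [tM_add, tM_single, ← mul_assoc, mul_comm f, mul_assoc] at h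
    have h4 := colon_step x W e w (nzd x hreg _ _ e rfl w
      (fun i hi => (Finset.mem_filter.1 hi).2)) _ h
    have h5 := ih d (by omega) _ f h4
    simpa only [tsub_tsub] using h5

lemma reg_span {S : Type*} [CommRing S] (E : Set S)
    (hreg : ∀ l : List S, (∀ z ∈ l, z ∈ E) → l.Nodup → RingTheory.Sequence.IsRegular S l)
    (s : Finset E) (z : E) (hz : z ∉ s) (f : S)
    (hf : (z : S) * f ∈ Ideal.span ((fun y : E => (y : S)) '' (s : Set E))) :
    f ∈ Ideal.span ((fun y : E => (y : S)) '' (s : Set E)) := by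
  have h := (hreg ((s.toList ++ [z]).map (fun y : E => (y : S))) (by
    intro y hy
    obtain ⟨w, _, rfl⟩ := List.mem_map.1 hy
    exact w.2) (List.Nodup.map Subtype.val_injective (by
      rw [List.nodup_append]
      refine ⟨s.nodup_toList, by simp, ?_⟩
      intro a ha b hb
      rw [List.mem_singleton] at hb
      subst hb
      rintro rfl
      exact hz (by simpa using ha)))).toIsWeaklyRegular
  rw [List.map_append, RingTheory.Sequence.isWeaklyRegular_append_iff] at h
  have h2 := h.2
  rw [List.map_singleton, RingTheory.Sequence.isWeaklyRegular_singleton_iff] at h2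
  have h3 : (Ideal.ofList (s.toList.map (fun y : E => (y : S)))) • (⊤ : Submodule S S) =
      Ideal.span ((fun y : E => (y : S)) '' (s : Set E)) := by
    rw [smul_eq_mul, Ideal.mul_top, Ideal.ofList]
    congr 1
    ext y
    simp
  rw [h3] at h2
  exact mem_of_isSMulRegular_quotient_of_smul_mem h2 hf
end mono

section fin
variable {k : Type} [Field k] {n m : ℕ}

/-- extension by zero of a chain -/
noncomputable def tExt {p : ℕ} (f : TaylorMod k n m p) (τ : Finset (Fin m)) : MvPolynomial (Fin n) k :=
  if h : τ.card = p then f ⟨τ, h⟩ else 0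

lemma taylorD_apply (c : Finset (Fin m) → Fin m → MvPolynomial (Fin n) k) (p : ℕ) (hp : 1 ≤ p)
    (f : TaylorMod k n m p) (τ : {σ : Finset (Fin m) // σ.card = p - 1}) :
    taylorD k n m c p f τ = tD c univ ∅ (tExt f) τ.1 := by
  induction f using Finsupp.induction_linear with
  | zero => simp [tD, tExt]
  | add f g hf hg =>
    rw [map_add, Finsupp.add_apply, hf, hg, ← tD_add]
    congr 1
    funext s
    unfold tExt
    split_ifs <;> simp
  | single σ r =>
    have e1 : ∀ s : Finset (Fin m), tExt (Finsupp.single σ r : TaylorMod k n m p) s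
        = if σ.1 = s then r else 0 := by
      intro s
      unfold tExt
      by_cases h : s.card = p
      · rw [dif_pos h, Finsupp.single_apply]
        simp only [Subtype.ext_iff]
      · rw [dif_neg h, if_neg]
        rintro rfl
        exact h σ.2
    unfold taylorD tD
    simp only [e1, Finsupp.lsum_single, LinearMap.toSpanSingleton_apply, Finsupp.smul_apply,
      Finsupp.finsetSum_apply, Finsupp.single_apply, smul_eq_mul, Subtype.ext_iff, mul_ite,
      mul_zero, Finset.empty_union]
    rw [Finset.sum_attach σ.1 (fun i => if σ.1.erase i = τ.1 then
      (-1) ^ (σ.1.filter (fun j => j < i)).card * c σ.1 i else 0), ← Finset.sum_filter,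
      ← Finset.sum_filter, Finset.mul_sum]
    have hset : σ.1.filter (fun i => σ.1.erase i = τ.1) =
        (univ \ τ.1).filter (fun i => σ.1 = insert i τ.1) := by
      ext i
      simp only [mem_filter, mem_sdiff, mem_univ, true_and]
      constructor
      · rintro ⟨h1, h2⟩
        rw [← h2]
        exact ⟨Finset.notMem_erase _ _, (Finset.insert_erase h1).symm⟩
      · rintro ⟨h1, h2⟩
        rw [h2]
        exact ⟨Finset.mem_insert_self _ _, Finset.erase_insert h1⟩
    rw [hset]
    refine Finset.sum_congr rfl fun i hi => ?_
    obtain ⟨h1, h2⟩ := mem_filter.1 hi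
    rw [h2, Finset.filter_insert, if_neg (lt_irrefl _)]
    ring

lemma tExt_taylorD (c : Finset (Fin m) → Fin m → MvPolynomial (Fin n) k) (p : ℕ) (hp : 1 ≤ p)
    (f : TaylorMod k n m p) (τ : Finset (Fin m)) :
    tExt (taylorD k n m c p f) τ = tD c univ ∅ (tExt f) τ := by
  unfold tExt
  split_ifs with h
  · rw [taylorD_apply c p hp]; rfl
  · unfold tD
    symm
    refine Finset.sum_eq_zero fun i hi => ?_
    beta_reduce
    rw [dif_neg, mul_zero]
    rw [Finset.card_insert_of_notMem (mem_sdiff.1 hi).2]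
    omega

lemma tExt_inj {p : ℕ} (f g : TaylorMod k n m p) (h : ∀ τ, tExt f τ = tExt g τ) : f = g := by
  ext1 σ
  have := h σ.1
  simpa [tExt, σ.2] using this

lemma tExt_zero {p : ℕ} (τ) : tExt (0 : TaylorMod k n m p) τ = 0 := by
  simp [tExt]

lemma tM_ne_zero {R ι : Type*} [CommRing R] [IsDomain R] (x : ι → R) (hx : ∀ i, x i ≠ 0)
    (a : ι →₀ ℕ) : tM x a ≠ 0 :=
  Finset.prod_ne_zero_iff.2 fun i _ => pow_ne_zero _ (hx i)

lemma exists_exponent {R : Type*} [CommRing R] [IsDomain R] [UniqueFactorizationMonoid R]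
    (E : Set R) (q : R) (hq : q ≠ 0)
    (hfac : ∀ z : R, Irreducible z → z ∣ q → ∃ w ∈ E, Associated z w) :
    ∃ a : E →₀ ℕ, Associated q (tM (fun y : E => (y : R)) a) := by
  induction q using UniqueFactorizationMonoid.induction_on_prime with
  | h₁ => exact absurd rfl hq
  | h₂ u hu => exact ⟨0, by rw [tM_zero]; exact associated_one_iff_isUnit.2 hu⟩
  | h₃ b p hb hp ih =>
    obtain ⟨a, ha⟩ := ih hb fun z hz hd => hfac z hz (hd.mul_left _)
    obtain ⟨w, hw, hpw⟩ := hfac p hp.irreducible (dvd_mul_right _ _)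
    refine ⟨Finsupp.single ⟨w, hw⟩ 1 + a, ?_⟩
    rw [tM_add, tM_single]
    exact hpw.mul_mul ha

lemma tM_sup_dvd {R : Type*} [CommRing R] [IsDomain R] [UniqueFactorizationMonoid R]
    (E : Set R) (hEirr : ∀ z ∈ E, Irreducible z)
    (hEassoc : ∀ z ∈ E, ∀ w ∈ E, z ≠ w → ¬ Associated z w) {α : Type*} (σ : Finset α)
    (e : α → E →₀ ℕ) (t : R) (h : ∀ i ∈ σ, tM (fun y : E => (y : R)) (e i) ∣ t) :
    tM (fun y : E => (y : R)) (σ.sup e) ∣ t := by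
  classical
  unfold tM Finsupp.prod
  refine Finset.prod_dvd_of_isRelPrime ?_ ?_
  · intro z _ w _ hzw
    refine IsRelPrime.pow ?_
    rw [(hEirr z z.2).isRelPrime_iff_not_dvd]
    intro hd
    exact hEassoc z z.2 w w.2 (fun h => hzw (Subtype.ext h))
      ((hEirr z z.2).associated_of_dvd (hEirr w w.2) hd)
  · intro z hz
    have key : (z : R) ^ (σ.sup e) z ∣ t := by
      have hs : ∀ s : Finset α, (∀ i ∈ s, (z : R) ^ (e i z) ∣ t) → (z : R) ^ ((s.sup e) z) ∣ t := by
        intro s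
        induction s using Finset.induction_on with
        | empty => intro _; rw [Finset.sup_empty, Finsupp.bot_eq_zero]; simp
        | insert a s _ ih =>
          intro hh
          rw [Finset.sup_insert, Finsupp.sup_apply]
          rcases le_total (e a z) (s.sup e z) with h1 | h1
          · rw [sup_eq_right.2 h1]
            exact ih fun i hi => hh i (Finset.mem_insert_of_mem hi)
          · rw [sup_eq_left.2 h1]
            exact hh a (Finset.mem_insert_self _ _)
      refine hs σ fun i hi => ?_
      refine dvd_trans ?_ (h i hi)
      have h2 : Finsupp.single z (e i z) ≤ e i := by
        rw [Finsupp.single_le_iff]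
      have h3 := tM_dvd (fun y : E => (y : R)) h2
      rwa [tM, Finsupp.prod_single_index (by simp)] at h3
    exact key

lemma span_image_congr {R α : Type*} [CommRing R] (W : Finset α) (f g : α → R)
    (h : ∀ i ∈ W, Associated (f i) (g i)) :
    Ideal.span (f '' (W : Set α)) = Ideal.span (g '' (W : Set α)) := by
  apply le_antisymm <;> rw [Ideal.span_le] <;> rintro _ ⟨i, hi, rfl⟩
  · exact Ideal.mem_of_dvd _ (h i hi).symm.dvd (Ideal.subset_span ⟨i, hi, rfl⟩)
  · exact Ideal.mem_of_dvd _ (h i hi).dvd (Ideal.subset_span ⟨i, hi, rfl⟩)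

end fin

/-- Let `E` be a set of pairwise non-associated irreducible polynomials
of `S` containing all irreducible factors of every element of `𝒜`.  If every finite
sequence of distinct elements of `E` is a regular sequence on `S`, then the Taylor
complex of `𝒜` is a resolution of `S/I`. -/
theorem taylor_resolution_of_regular_factors (k : Type) [Field k] (n m : ℕ)
    (Q : Fin m → MvPolynomial (Fin n) k)
    (hQ0 : ∀ i, Q i ≠ 0)
    (hQhom : ∀ i, ∃ d, (Q i).IsHomogeneous d)
    (hQdvd : ∀ i j, i ≠ j → ¬ Q i ∣ Q j)
    (L : Finset (Fin m) → MvPolynomial (Fin n) k)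
    (hLdvd : ∀ σ, ∀ i ∈ σ, Q i ∣ L σ)
    (hLlcm : ∀ σ t, (∀ i ∈ σ, Q i ∣ t) → L σ ∣ t)
    (c : Finset (Fin m) → Fin m → MvPolynomial (Fin n) k)
    (hc : ∀ σ, ∀ i ∈ σ, c σ i * L (σ.erase i) = L σ)
    (E : Set (MvPolynomial (Fin n) k))
    (hEirr : ∀ z ∈ E, Irreducible z)
    (hEassoc : ∀ z ∈ E, ∀ w ∈ E, z ≠ w → ¬ Associated z w)
    (hEfac : ∀ i, ∀ z : MvPolynomial (Fin n) k, Irreducible z → z ∣ Q i →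
      ∃ w ∈ E, Associated z w)
    (hreg : ∀ l : List (MvPolynomial (Fin n) k), (∀ z ∈ l, z ∈ E) → l.Nodup →
      RingTheory.Sequence.IsRegular (MvPolynomial (Fin n) k) l) :
    IsTaylorResolution k n m Q c := by
  
  classical
  have hE0 : ∀ y : E, (y : MvPolynomial (Fin n) k) ≠ 0 := fun y => (hEirr y y.2).ne_zero
  choose e he using fun i => exists_exponent E (Q i) (hQ0 i) (hEfac i)
  have hL : ∀ σ, Associated (L σ) (tM (fun y : E => (y : MvPolynomial (Fin n) k)) (σ.sup e)) := by
    intro σ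
    refine associated_of_dvd_dvd (hLlcm σ _ fun i hi => ?_) ?_
    · exact (he i).dvd.trans (tM_dvd _ (Finset.le_sup hi))
    · exact tM_sup_dvd E hEirr hEassoc σ e _ fun i hi => (he i).symm.dvd.trans (hLdvd σ i hi)
  have hL0 : ∀ σ, L σ ≠ 0 := fun σ => (hL σ).ne_zero_iff.2 (tM_ne_zero _ hE0 _)
  have hcM : ∀ B : Finset (Fin m), ∀ i ∉ B, Associated (c (insert i B) i)
      (tM (fun y : E => (y : MvPolynomial (Fin n) k)) (e i - B.sup e)) := by
    intro B i hi
    have h1 := hc (insert i B) i (Finset.mem_insert_self _ _)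
    rw [Finset.erase_insert hi] at h1
    have h2 : (insert i B).sup e = (e i - B.sup e) + B.sup e := by
      rw [Finset.sup_insert]
      ext z
      simp only [Finsupp.sup_apply, Finsupp.add_apply, Finsupp.tsub_apply]
      omega
    have h3 := hL (insert i B)
    rw [h2, tM_add, ← h1] at h3
    exact Associated.of_mul_right h3 (hL B) (hL0 B)
  have hcomm : ∀ σ, ∀ i ∈ σ, ∀ j ∈ σ, i ≠ j →
      c σ i * c (σ.erase i) j = c σ j * c (σ.erase j) i := by
    intro σ i hi j hj hij
    apply mul_right_cancel₀ (hL0 ((σ.erase i).erase j))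
    rw [mul_assoc, hc (σ.erase i) j (Finset.mem_erase.2 ⟨hij.symm, hj⟩), hc σ i hi,
      Finset.erase_right_comm, mul_assoc, hc (σ.erase j) i (Finset.mem_erase.2 ⟨hij, hi⟩),
      hc σ j hj]
  have hcolon : ∀ (W B : Finset (Fin m)) (a : Fin m), a ∉ W → a ∉ B → Disjoint W B →
      ∀ f : MvPolynomial (Fin n) k,
      f * c (insert a B) a ∈ Ideal.span ((fun i => c (insert i B) i) '' (W : Set (Fin m))) →
      f ∈ Ideal.span ((fun i => c (insert i (insert a B)) i) '' (W : Set (Fin m))) := by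
    intro W B a haW haB hWB f hf
    have hiB : ∀ i ∈ W, i ∉ B := fun i hi => Finset.disjoint_left.1 hWB hi
    have hiaB : ∀ i ∈ W, i ∉ insert a B := by
      intro i hi h
      rcases Finset.mem_insert.1 h with rfl | h
      · exact haW hi
      · exact hiB i hi h
    rw [span_image_congr W _ _ (fun i hi => hcM B i (hiB i hi))] at hf
    rw [span_image_congr W _ _ (fun i hi => hcM (insert a B) i (hiaB i hi))]
    have h1 := colon (fun y : E => (y : MvPolynomial (Fin n) k)) (reg_span E hreg) W
      (e a - B.sup e) (fun i => e i - B.sup e) f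
      (Ideal.mem_of_dvd _ (mul_dvd_mul_left _ (hcM B a haB).dvd) hf)
    have h2 : ∀ i, e i - (insert a B).sup e = e i - B.sup e - (e a - B.sup e) := by
      intro i
      rw [Finset.sup_insert]
      ext z
      simp only [Finsupp.sup_apply, Finsupp.tsub_apply]
      omega
    simp only [h2]
    exact h1
  refine ⟨fun p hp => ?_, ?_⟩
  · apply le_antisymm
    · intro f hf
      rw [LinearMap.mem_ker] at hf
      obtain ⟨g, hg⟩ := tD_exact c hcomm hcolon univ ∅ (Finset.disjoint_empty_right _) (tExt f)
        (by
          have : tExt f ∅ = 0 := by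
            unfold tExt
            rw [dif_neg]
            rw [Finset.card_empty]; omega
          rw [this]; exact zero_mem _)
        (fun τ _ => by rw [← tExt_taylorD c p hp, hf, tExt_zero])
      let G : TaylorMod k n m (p + 1) := Finsupp.equivFunOnFinite.symm fun σ => g σ.1
      refine ⟨G, ?_⟩
      ext1 σ
      rw [taylorD_apply c (p + 1) (by omega)]
      have h1 := hg σ.1 (Finset.subset_univ _)
      have h2 : tExt f σ.1 = f σ := by
        unfold tExt; exact dif_pos σ.2
      rw [← h2, h1]
      unfold tD
      refine Finset.sum_congr rfl fun i hi => ?_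
      congr 1
      unfold tExt
      have h3 := σ.2
      rw [dif_pos (by
        rw [Finset.card_insert_of_notMem (mem_sdiff.1 hi).2]; omega)]
      rfl
    · rintro _ ⟨g, rfl⟩
      rw [LinearMap.mem_ker]
      apply tExt_inj
      intro τ
      rw [tExt_taylorD c p hp, tExt_zero]
      rw [← tD_tD c hcomm univ ∅ (Finset.disjoint_empty_right _) (tExt g) τ
        (Finset.subset_univ _)]
      congr 1
      funext s
      exact tExt_taylorD c (p + 1) (by omega) g s
  · have haug : ∀ f : TaylorMod k n m 0, taylorAug k n m f = f ⟨∅, rfl⟩ := by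
      intro f
      unfold taylorAug
      rw [Finsupp.lsum_apply, Finsupp.sum_fintype _ _ (by simp)]
      rw [Fintype.sum_eq_single ⟨∅, rfl⟩]
      · rfl
      · intro σ hσ
        exact absurd (Subtype.ext (Finset.card_eq_zero.1 σ.2)) hσ
    have hQc : ∀ i, Associated (c {i} i) (Q i) := by
      intro i
      have h1 := hcM ∅ i (Finset.notMem_empty _)
      simp only [Finset.sup_empty, insert_empty_eq] at h1
      have h2 : e i - ⊥ = e i := by rw [Finsupp.bot_eq_zero, tsub_zero]
      rw [h2] at h1
      exact h1.trans (he i).symm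
    have hspan : Ideal.span (Set.range Q) =
        Ideal.span ((fun i => c {i} i) '' ((univ : Finset (Fin m)) : Set (Fin m))) := by
      rw [span_image_congr univ _ Q (fun i _ => hQc i)]
      simp
    rw [hspan]
    apply le_antisymm
    · rintro _ ⟨_, ⟨f, rfl⟩, rfl⟩
      rw [haug, taylorD_apply c 1 le_rfl]
      unfold tD
      refine sum_mem fun i _ => ?_
      rw [mul_right_comm]
      refine Ideal.mul_mem_left _ _ (Ideal.subset_span ⟨i, by simp, ?_⟩)
      simp
    · rw [Ideal.span_le]
      rintro _ ⟨i, _, rfl⟩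
      refine ⟨_, ⟨Finsupp.single ⟨{i}, Finset.card_singleton i⟩ 1, rfl⟩, ?_⟩
      rw [haug, taylorD_apply c 1 le_rfl]
      unfold tD tExt
      simp only [Finset.sdiff_empty, Finset.empty_union, insert_empty_eq]
      rw [Finset.sum_eq_single i]
      · simp
      · intro j _ hj
        simp [Finsupp.single_apply, Ne.symm hj]
      · simp
end

section
/- If every element of 𝒜 is a monomial (a product of powers of the variables), then the Taylor complex of 𝒜 is a resolution of S/I. -/
open Finset

namespace TaylorAux

variable {k : Type} [Field k] {n m : ℕ}

/-- The simplicial sign. -/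
noncomputable def sg (R : Type) [CommRing R] (i : Fin m) (τ : Finset (Fin m)) : R :=
  (-1) ^ (τ.filter (fun j => j < i)).card

/-- The simplicial boundary. -/
noncomputable def bd {R : Type} [CommRing R] (f : Finset (Fin m) → R) (τ : Finset (Fin m)) : R :=
  ∑ i, if i ∈ τ then 0 else sg R i τ * f (insert i τ)

/-- The cone homotopy. -/
noncomputable def hh {R : Type} [CommRing R] (a : Fin m) (f : Finset (Fin m) → R) (τ : Finset (Fin m)) : R :=
  if a ∈ τ then sg R a (τ.erase a) * f (τ.erase a) else 0

theorem sg_sq (R : Type) [CommRing R] (i : Fin m) (τ : Finset (Fin m)) :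
    sg R i τ * sg R i τ = 1 := by
  unfold sg
  rw [← pow_add, ← two_mul, pow_mul]; simp

theorem sg_insert_lt (R : Type) [CommRing R] (i a : Fin m) (ρ : Finset (Fin m)) (ha : a ∉ ρ)
    (h : a < i) : sg R i (insert a ρ) = - sg R i ρ := by
  unfold sg
  rw [Finset.filter_insert, if_pos h, Finset.card_insert_of_notMem (by simp [ha]), pow_succ]
  ring

theorem sg_insert_not_lt (R : Type) [CommRing R] (i a : Fin m) (ρ : Finset (Fin m))
    (h : ¬ a < i) : sg R i (insert a ρ) = sg R i ρ := by
  unfold sg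
  rw [Finset.filter_insert, if_neg h]

theorem sg_swap (R : Type) [CommRing R] (i a : Fin m) (ρ : Finset (Fin m)) (hi : i ∉ ρ)
    (ha : a ∉ ρ) (h : i ≠ a) :
    sg R i (insert a ρ) * sg R a (insert i ρ) = - (sg R i ρ * sg R a ρ) := by
  rcases lt_or_gt_of_ne h with h | h
  · rw [sg_insert_not_lt R i a ρ h.not_gt, sg_insert_lt R a i ρ hi h]; ring
  · rw [sg_insert_not_lt R a i ρ h.not_gt, sg_insert_lt R i a ρ ha h]; ring

theorem sg_swap' (R : Type) [CommRing R] (i a : Fin m) (ρ : Finset (Fin m)) (hi : i ∉ ρ)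
    (ha : a ∉ ρ) (h : i ≠ a) :
    sg R i ρ * sg R a (insert i ρ) = - (sg R a ρ * sg R i (insert a ρ)) := by
  rcases lt_or_gt_of_ne h with h | h
  · rw [sg_insert_not_lt R i a ρ h.not_gt, sg_insert_lt R a i ρ hi h]; ring
  · rw [sg_insert_not_lt R a i ρ h.not_gt, sg_insert_lt R i a ρ ha h]; ring

theorem bd_bd {R : Type} [CommRing R] (f : Finset (Fin m) → R) (τ : Finset (Fin m)) :
    bd (bd f) τ = 0 := by
  have h1 : bd (bd f) τ = ∑ x : Fin m × Fin m,
      if x.1 ∈ τ ∨ x.2 ∈ τ ∨ x.1 = x.2 then 0 else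
        sg R x.1 τ * sg R x.2 (insert x.1 τ) * f (insert x.2 (insert x.1 τ)) := by
    rw [Fintype.sum_prod_type]
    unfold bd
    refine Finset.sum_congr rfl fun i _ => ?_
    by_cases hi : i ∈ τ
    · simp [hi]
    · rw [if_neg hi, Finset.mul_sum]
      refine Finset.sum_congr rfl fun j _ => ?_
      by_cases hj : j ∈ τ
      · simp [hj]
      · by_cases hij : i = j
        · simp [hij]
        · simp [hi, hj, hij, Ne.symm hij, mul_assoc]
  rw [h1]
  refine Finset.sum_involution (fun x _ => (x.2, x.1)) ?_ ?_ ?_ ?_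
  · rintro ⟨i, j⟩ _
    by_cases hi : i ∈ τ
    · simp [hi]
    by_cases hj : j ∈ τ
    · simp [hj]
    by_cases hij : i = j
    · simp [hij]
    simp only [hi, hj, hij, Ne.symm hij, or_self, if_false]
    rw [sg_swap' R i j τ hi hj hij, Finset.insert_comm]
    ring
  · rintro ⟨i, j⟩ _ h e
    simp only [Prod.mk.injEq] at e
    apply h
    simp [e.1]
  · simp
  · simp

theorem bd_hh {R : Type} [CommRing R] (a : Fin m) (f : Finset (Fin m) → R)
    (hf : ∀ τ, bd f τ = 0) (τ : Finset (Fin m)) : bd (hh a f) τ = f τ := by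
  by_cases ha : a ∈ τ
  · obtain ⟨ρ, hρ, rfl⟩ : ∃ ρ, a ∉ ρ ∧ insert a ρ = τ :=
      ⟨τ.erase a, by simp, Finset.insert_erase ha⟩
    have h0 := hf ρ
    have key : bd (hh a f) (insert a ρ) = f (insert a ρ) - sg R a ρ * bd f ρ := by
      unfold bd
      rw [Finset.mul_sum, ← Finset.sum_erase_add _ _ (Finset.mem_univ a),
        ← Finset.sum_erase_add (a := a) _ (fun i => sg R a ρ * _) (Finset.mem_univ a)]
      rw [if_neg hρ, if_pos (Finset.mem_insert_self a ρ), ← mul_assoc, sg_sq, one_mul, add_zero,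
        ← sub_sub, sub_right_comm, sub_self, zero_sub, ← Finset.sum_neg_distrib]
      refine Finset.sum_congr rfl fun i hi => ?_
      have hia : i ≠ a := (Finset.mem_erase.1 hi).1
      by_cases hi : i ∈ ρ
      · simp [hi]
      · have h2 : i ∉ insert a ρ := by simp [hi, hia]
        have h3 : (insert i (insert a ρ)).erase a = insert i ρ := by
          rw [Finset.insert_comm, Finset.erase_insert]
          simp [hρ, Ne.symm hia]
        rw [if_neg h2, if_neg hi]
        unfold hh
        rw [if_pos (by simp), h3, ← mul_assoc, sg_swap R i a ρ hi hρ hia]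
        ring
    rw [key, h0]; simp
  · unfold bd
    rw [Finset.sum_eq_single a]
    · rw [if_neg ha]
      unfold hh
      rw [if_pos (Finset.mem_insert_self a τ), Finset.erase_insert ha, ← mul_assoc, sg_sq, one_mul]
    · intro i _ hia
      by_cases hi : i ∈ τ
      · simp [hi]
      · simp [hi, hh, ha, Ne.symm hia]
    · simp

/-- Extension by zero. -/
noncomputable def ex {p : ℕ} (x : TaylorMod k n m p) (σ : Finset (Fin m)) : MvPolynomial (Fin n) k :=
  if h : σ.card = p then x ⟨σ, h⟩ else 0

theorem ex_add {p : ℕ} (x y : TaylorMod k n m p) (σ : Finset (Fin m)) :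
    ex (x + y) σ = ex x σ + ex y σ := by
  unfold ex; split_ifs <;> simp

theorem ex_zero {p : ℕ} (σ : Finset (Fin m)) : ex (0 : TaylorMod k n m p) σ = 0 := by
  unfold ex; split_ifs <;> simp

theorem ex_sum {p : ℕ} {ι : Type} (s : Finset ι) (x : ι → TaylorMod k n m p)
    (σ : Finset (Fin m)) : ex (∑ i ∈ s, x i) σ = ∑ i ∈ s, ex (x i) σ := by
  classical
  induction s using Finset.induction_on with
  | empty => simp [ex_zero]
  | insert a s ha ih => rw [Finset.sum_insert ha, Finset.sum_insert ha, ex_add, ih]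

theorem ex_single {p : ℕ} (σ : {σ : Finset (Fin m) // σ.card = p}) (a : MvPolynomial (Fin n) k)
    (τ : Finset (Fin m)) :
    ex (Finsupp.single σ a : TaylorMod k n m p) τ = if σ.1 = τ then a else 0 := by
  unfold ex
  obtain ⟨σ, hσ⟩ := σ
  by_cases h : σ = τ
  · subst h; simp [hσ]
  · simp [h]

theorem bd_add {R : Type} [CommRing R] (f g : Finset (Fin m) → R) (τ : Finset (Fin m)) :
    bd (fun σ => f σ + g σ) τ = bd f τ + bd g τ := by
  unfold bd
  rw [← Finset.sum_add_distrib]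
  refine Finset.sum_congr rfl fun i _ => ?_
  split_ifs <;> ring

theorem taylorD_single (c : Finset (Fin m) → Fin m → MvPolynomial (Fin n) k) (p : ℕ)
    (σ : {σ : Finset (Fin m) // σ.card = p}) (a : MvPolynomial (Fin n) k) :
    taylorD k n m c p (Finsupp.single σ a) = a • (∑ i ∈ σ.1.attach,
        Finsupp.single
          ⟨σ.1.erase i.1, by rw [Finset.card_erase_of_mem i.2, σ.2]⟩
          ((-1) ^ (σ.1.filter (fun j => j < i.1)).card * c σ.1 i.1)) := by
  unfold taylorD
  simp only [Finsupp.lsum_single, LinearMap.toSpanSingleton_apply]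

theorem ex_taylorD (L : Finset (Fin m) → MvPolynomial (Fin n) k)
    (c : Finset (Fin m) → Fin m → MvPolynomial (Fin n) k)
    (hc : ∀ σ, ∀ i ∈ σ, c σ i * L (σ.erase i) = L σ) (p : ℕ) (x : TaylorMod k n m p)
    (τ : Finset (Fin m)) :
    ex (taylorD k n m c p x) τ * L τ = bd (fun σ => ex x σ * L σ) τ := by
  induction x using Finsupp.induction_linear with
  | zero => simp [ex_zero, bd]
  | add x y hx hy =>
    rw [map_add, ex_add, add_mul, hx, hy, ← bd_add]
    congr 1; funext σ; rw [ex_add, add_mul]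
  | single σ a =>
    rw [taylorD_single, Finset.smul_sum, ex_sum, Finset.sum_mul]
    simp only [Finsupp.smul_single, ex_single]
    rw [Finset.sum_attach σ.1 (fun i => (if σ.1.erase i = τ then
      a • ((-1) ^ (σ.1.filter (fun j => j < i)).card * c σ.1 i) else 0) * L τ)]
    unfold bd
    rw [← Finset.sum_filter_add_sum_filter_not Finset.univ (fun i => i ∈ σ.1)]
    rw [Finset.sum_eq_zero (s := Finset.univ.filter (fun i => i ∉ σ.1)), add_zero]
    · have : Finset.univ.filter (fun i => i ∈ σ.1) = σ.1 := by ext; simp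
      rw [this]
      refine Finset.sum_congr rfl fun i hi => ?_
      by_cases h : σ.1.erase i = τ
      · subst h
        rw [if_pos rfl, if_neg (by simp), Finset.insert_erase hi]
        beta_reduce
        rw [if_pos rfl, ← hc σ.1 i hi]
        have : sg (MvPolynomial (Fin n) k) i (σ.1.erase i)
            = (-1) ^ (σ.1.filter (fun j => j < i)).card := by
          rw [← sg_insert_not_lt _ i i _ (lt_irrefl i), Finset.insert_erase hi]; rfl
        rw [this, smul_eq_mul]; ring
      · rw [if_neg h]
        by_cases h2 : i ∈ τ
        · simp [h2]
        · have : σ.1 ≠ insert i τ := by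
            intro e; apply h; rw [e, Finset.erase_insert h2]
          simp [this]
    · intro i hi
      have hi : i ∉ σ.1 := by simpa using hi
      have : σ.1 ≠ insert i τ := by
        intro e; apply hi; rw [e]; simp
      simp [this]

theorem mono_dvd_iff (d : Fin n →₀ ℕ) (q : MvPolynomial (Fin n) k) :
    MvPolynomial.monomial d 1 ∣ q ↔ ∀ e, q.coeff e ≠ 0 → d ≤ e := by
  constructor
  · rintro ⟨r, rfl⟩ e he
    rw [MvPolynomial.coeff_monomial_mul'] at he
    by_contra h
    simp [h] at he
  · intro h
    rw [q.as_sum]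
    refine Finset.dvd_sum fun e he => ?_
    have := h e (by simpa using he)
    refine ⟨MvPolynomial.monomial (e - d) (q.coeff e), ?_⟩
    rw [MvPolynomial.monomial_mul, one_mul, add_tsub_cancel_of_le this]

/-- Projection of `q` to the monomials with `P`. -/
noncomputable def pr (P : (Fin n →₀ ℕ) → Prop) (q : MvPolynomial (Fin n) k) : MvPolynomial (Fin n) k :=
  open Classical in ∑ e ∈ q.support, MvPolynomial.monomial e (if P e then q.coeff e else 0)

open Classical in
theorem coeff_pr (P : (Fin n →₀ ℕ) → Prop) (q : MvPolynomial (Fin n) k) (e : Fin n →₀ ℕ) :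
    (pr P q).coeff e = if P e then q.coeff e else 0 := by
  unfold pr
  rw [MvPolynomial.coeff_sum]
  simp only [MvPolynomial.coeff_monomial, Finset.sum_ite_eq']
  by_cases h : q.coeff e = 0 <;> simp [h]

theorem sg_C (i : Fin m) (τ : Finset (Fin m)) :
    sg (MvPolynomial (Fin n) k) i τ = MvPolynomial.C (sg k i τ) := by
  unfold sg; simp

theorem coeff_bd (f : Finset (Fin m) → MvPolynomial (Fin n) k) (τ : Finset (Fin m))
    (e : Fin n →₀ ℕ) : (bd f τ).coeff e = bd (fun σ => (f σ).coeff e) τ := by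
  unfold bd
  rw [MvPolynomial.coeff_sum]
  refine Finset.sum_congr rfl fun i _ => ?_
  split_ifs
  · simp
  · rw [sg_C, MvPolynomial.coeff_C_mul]

theorem exists_primitive (D : Fin m → Fin n →₀ ℕ) (p : ℕ) (hp : 1 ≤ p)
    (Y : Finset (Fin m) → MvPolynomial (Fin n) k)
    (hY : ∀ σ, σ.card ≠ p → Y σ = 0)
    (hD : ∀ σ, ∀ i ∈ σ, MvPolynomial.monomial (D i) 1 ∣ Y σ)
    (hb : ∀ τ, bd Y τ = 0) :
    ∃ Z : Finset (Fin m) → MvPolynomial (Fin n) k, (∀ σ, σ.card ≠ p + 1 → Z σ = 0) ∧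
      (∀ σ, ∀ i ∈ σ, MvPolynomial.monomial (D i) 1 ∣ Z σ) ∧ ∀ τ, bd Z τ = Y τ := by
  classical
  have hj : ∀ e : Fin n →₀ ℕ, ∃ j : Option (Fin m),
      (∀ a, j = some a → D a ≤ e) ∧ (j = none → ∀ a, ¬ D a ≤ e) := by
    intro e
    by_cases h : ∃ a, D a ≤ e
    · obtain ⟨a, ha⟩ := h
      exact ⟨some a, by rintro b ⟨⟩; exact ha, by simp⟩
    · exact ⟨none, by simp, fun _ a ha => h ⟨a, ha⟩⟩
  choose j hj1 hj2 using hj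
  let Z : Finset (Fin m) → MvPolynomial (Fin n) k := fun σ =>
    ∑ a, hh a (fun τ => pr (fun e => j e = some a) (Y τ)) σ
  have hcoef : ∀ σ e, (Z σ).coeff e =
      ∑ a, if j e = some a then hh a (fun τ => (Y τ).coeff e) σ else 0 := by
    intro σ e
    simp only [Z, MvPolynomial.coeff_sum]
    refine Finset.sum_congr rfl fun a _ => ?_
    unfold hh
    by_cases ha : a ∈ σ
    · rw [if_pos ha, if_pos ha, sg_C, MvPolynomial.coeff_C_mul, coeff_pr]
      split_ifs <;> simp
    · simp [ha]
  have hsome : ∀ e a, j e = some a → ∀ σ, (Z σ).coeff e = hh a (fun τ => (Y τ).coeff e) σ := by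
    intro e a h σ
    rw [hcoef, Finset.sum_eq_single a]
    · simp [h]
    · intro b _ hb
      rw [h, if_neg]
      simpa using Ne.symm hb
    · simp
  have hnone : ∀ e, j e = none → ∀ σ, (Z σ).coeff e = 0 := by
    intro e h σ
    rw [hcoef]; simp [h]
  refine ⟨Z, ?_, ?_, ?_⟩
  · intro σ hσ
    ext e
    rw [MvPolynomial.coeff_zero]
    rcases h : j e with _ | a
    · exact hnone e h σ
    · rw [hsome e a h]
      unfold hh
      split_ifs with ha
      · beta_reduce
        rw [hY (σ.erase a)]
        · simp
        · rw [Finset.card_erase_of_mem ha]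
          have := Finset.card_pos.2 ⟨a, ha⟩
          omega
      · rfl
  · intro σ i hi
    rw [mono_dvd_iff]
    intro e he
    rcases h : j e with _ | a
    · exact absurd (hnone e h σ) he
    · rw [hsome e a h] at he
      by_cases hia : i = a
      · subst hia; exact hj1 e _ h
      · unfold hh at he
        split_ifs at he with ha
        · exact (mono_dvd_iff _ _).1 (hD (σ.erase a) i (Finset.mem_erase.2 ⟨hia, hi⟩)) e
            (right_ne_zero_of_mul he)
        · exact absurd rfl he
  · intro τ
    ext e
    rw [coeff_bd]
    rcases h : j e with _ | a
    · simp only [hnone e h]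
      rw [show bd (fun _ : Finset (Fin m) => (0 : k)) τ = 0 by simp [bd]]
      by_contra hne
      have hτ : τ.card = p := by
        by_contra h'
        rw [hY τ h'] at hne
        simp at hne
      obtain ⟨i, hi⟩ := Finset.card_pos.1 (show 0 < τ.card by omega)
      exact hj2 e h i ((mono_dvd_iff _ _).1 (hD τ i hi) e (Ne.symm hne))
    · simp only [hsome e a h]
      apply bd_hh
      intro ρ
      rw [← coeff_bd, hb]; simp

theorem ex_inj {p : ℕ} (x y : TaylorMod k n m p) (h : ∀ σ, ex x σ = ex y σ) : x = y := by
  ext1 ⟨σ, hσ⟩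
  have := h σ
  simpa [ex, hσ] using this

end TaylorAux

open TaylorAux in
/-- If every element of `𝒜` is a monomial, then the Taylor complex of
`𝒜` is a resolution of `S/I`.  Here `Q : Fin m → S` lists the (distinct) elements of
`𝒜`, nonzero and homogeneous, none dividing another; `L σ` is a least common multiple
of `{Q i : i ∈ σ}` and `c σ i` is the quotient `L σ / L (σ.erase i)`. -/
theorem taylor_resolution_of_monomial (k : Type) [Field k] (n m : ℕ)
    (Q : Fin m → MvPolynomial (Fin n) k)
    (hQ0 : ∀ i, Q i ≠ 0)
    (hQhom : ∀ i, ∃ d, (Q i).IsHomogeneous d)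
    (hQdvd : ∀ i j, i ≠ j → ¬ Q i ∣ Q j)
    (L : Finset (Fin m) → MvPolynomial (Fin n) k)
    (hLdvd : ∀ σ, ∀ i ∈ σ, Q i ∣ L σ)
    (hLlcm : ∀ σ t, (∀ i ∈ σ, Q i ∣ t) → L σ ∣ t)
    (c : Finset (Fin m) → Fin m → MvPolynomial (Fin n) k)
    (hc : ∀ σ, ∀ i ∈ σ, c σ i * L (σ.erase i) = L σ)
    (hmono : ∀ i, ∃ d : Fin n →₀ ℕ, Q i = MvPolynomial.monomial d 1) :
    IsTaylorResolution k n m Q c := by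
  classical
  choose D hDQ using hmono
  have hL0 : ∀ σ, L σ ≠ 0 := fun σ h => by
    have h1 := hLlcm σ (∏ i ∈ σ, Q i) (fun i hi => Finset.dvd_prod_of_mem Q hi)
    rw [h, zero_dvd_iff, Finset.prod_eq_zero_iff] at h1
    obtain ⟨i, _, hi⟩ := h1
    exact hQ0 i hi
  have hLe : IsUnit (L ∅) := isUnit_of_dvd_one (hLlcm ∅ 1 (by simp))
  refine ⟨fun p hp => ?_, ?_⟩
  · apply le_antisymm
    · intro x hx
      rw [LinearMap.mem_ker] at hx
      obtain ⟨Z, hZ1, hZ2, hZ3⟩ := exists_primitive D p hp (fun σ => ex x σ * L σ)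
        (fun σ hσ => by simp [ex, hσ])
        (fun σ i hi => by rw [← hDQ]; exact (hLdvd σ i hi).mul_left _)
        (fun τ => by rw [← ex_taylorD L c hc, hx, ex_zero, zero_mul])
      have hdiv : ∀ σ, ∃ z, Z σ = L σ * z := fun σ =>
        hLlcm σ (Z σ) (fun i hi => by rw [hDQ]; exact hZ2 σ i hi)
      choose z hz using hdiv
      let w : TaylorMod k n m (p + 1) := Finsupp.equivFunOnFinite.symm (fun σ => z σ.1)
      have hw : ∀ σ, ex w σ * L σ = Z σ := by
        intro σ
        by_cases h : σ.card = p + 1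
        · rw [hz σ, mul_comm]; simp [ex, h, w]
        · rw [hZ1 σ h]; simp [ex, h]
      refine ⟨w, ?_⟩
      refine ex_inj (p := p) _ _ fun τ => ?_
      apply mul_right_cancel₀ (hL0 τ)
      have h1 := ex_taylorD L c hc (p + 1) w τ
      simp only [hw] at h1
      exact h1.trans (hZ3 τ)
    · rintro _ ⟨w, rfl⟩
      rw [LinearMap.mem_ker]
      refine ex_inj _ _ fun τ => ?_
      apply mul_right_cancel₀ (hL0 τ)
      rw [ex_zero, zero_mul]
      refine (ex_taylorD L c hc p _ τ).trans ?_
      have h1 := ex_taylorD L c hc (p + 1) w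
      have h2 : (fun σ => ex (p := p) (taylorD k n m c (p + 1) w) σ * L σ)
        = bd (fun σ => ex w σ * L σ) := funext h1
      rw [h2, bd_bd]
  · have hone : ∀ (σ : {σ : Finset (Fin m) // σ.card = 1}) (a : MvPolynomial (Fin n) k),
        ∀ i, σ.1 = {i} → taylorAug k n m (taylorD k n m c 1 (Finsupp.single σ a))
          = a * c {i} i := by
      rintro ⟨σ, hσ⟩ a i hi
      subst hi
      rw [taylorD_single, map_smul, map_sum]
      unfold taylorAug
      simp only [Finsupp.lsum_single, LinearMap.id_apply]
      rw [Finset.sum_attach ({i} : Finset (Fin m))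
        (fun j => (-1) ^ (({i} : Finset (Fin m)).filter (fun l => l < j)).card * c {i} j)]
      simp [Finset.filter_singleton]
    have hci : ∀ i, c {i} i * L ∅ = L {i} := fun i => by
      simpa using hc {i} i (by simp)
    apply le_antisymm
    · rintro _ ⟨_, ⟨x, rfl⟩, rfl⟩
      induction x using Finsupp.induction_linear with
      | zero => simp
      | add x y hx hy => rw [map_add, map_add]; exact add_mem hx hy
      | single σ a =>
        obtain ⟨i, hi⟩ := Finset.card_eq_one.1 σ.2
        rw [hone σ a i hi]
        apply Ideal.mul_mem_left
        have h1 : Q i ∣ c {i} i := by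
          rw [← hLe.dvd_mul_right, hci]
          exact hLdvd _ _ (by simp)
        exact Ideal.mem_of_dvd _ h1 (Ideal.subset_span ⟨i, rfl⟩)
    · refine Ideal.span_le.2 ?_
      rintro _ ⟨i, rfl⟩
      have h1 : c {i} i ∣ Q i :=
        (Dvd.intro _ (hci i)).trans (hLlcm {i} (Q i) (by simp))
      obtain ⟨b, hb⟩ := h1
      refine ⟨_, ⟨Finsupp.single ⟨{i}, by simp⟩ b, rfl⟩, ?_⟩
      rw [hone _ b i rfl, hb, mul_comm]
end
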